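/- arXiv:2010.08515 — 2 statements merged into one kernel-verified Lean document; each statement's English description precedes it below -/
import Mathlib

section
/- For U, V ∈ O(d), if x ∼ N(0, I_{2d}) and h_U(x) = sign(x_{1:d}ᵀ U x_{d+1:2d}), then P(h_U(x) ≠ h_V(x)) = (1/π) · E_{u ∼ Uniform(S^{d-1})}[ arccos( uᵀ U Vᵀ u ) ]. -/
open Matrix

open MeasureTheory ProbabilityTheory

/-- The uniform (normalized surface) probability measure on the unit sphere in `ℝ^d`. -/
noncomputable def uniformSphere (d : ℕ) :
    Measure (Metric.sphere (0 : EuclideanSpace ℝ (Fin d)) 1) :=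
  ((volume : Measure (EuclideanSpace ℝ (Fin d))).toSphere Set.univ)⁻¹ •
    (volume : Measure (EuclideanSpace ℝ (Fin d))).toSphere

/-- The standard Gaussian measure `N(0, I_{2d})` on `ℝ^{2d}`, coordinates indexed by
`Fin d ⊕ Fin d`. -/
noncomputable def stdGaussian2 (d : ℕ) : Measure (Fin d ⊕ Fin d → ℝ) :=
  Measure.pi fun _ => gaussianReal 0 1

/-!
Write `⟪S x, y⟫` and `⟪T x, y⟫` for the two bilinear forms. Given the first half `x`, the two
classifiers are half-spaces in `y` with normals `S x` and `T x`. The joint law of the two inner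
products depends only on the Gram matrix of the normals, so the normals may be moved to the complex
plane, where the argument of a Gaussian variable is uniform: the half-spaces disagree with
probability `angle (S x) (T x) / π`. This angle depends only on the direction of `x`, which is
uniform on the sphere.
-/

open InnerProductGeometry Module Real Set
open scoped ENNReal RealInnerProductSpace

lemma eq_inv_measure_univ_smul_of_eq_smul {α : Type*} [MeasurableSpace α] {μ ν : Measure α}
    [IsProbabilityMeasure μ] {c : ℝ≥0∞} (h : μ = c • ν) : μ = (ν univ)⁻¹ • ν := by
  have hc : c * ν univ = 1 := by
    rw [← smul_eq_mul, ← Measure.smul_apply, ← h, measure_univ]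
  rw [← ENNReal.eq_inv_of_mul_eq_one_left hc]
  exact h

section RadialDensity

variable {E : Type*} [NormedAddCommGroup E] [NormedSpace ℝ E] [MeasurableSpace E] [BorelSpace E]

lemma measurable_normalize : Measurable (NormedSpace.normalize : E → E) :=
  measurable_norm.inv.smul measurable_id

variable [FiniteDimensional ℝ E] [Nontrivial E]

lemma lintegral_norm_mul_normalize (μ : Measure E) [μ.IsAddHaarMeasure] {g : ℝ → ℝ≥0∞}
    {f : E → ℝ≥0∞} (hg : Measurable g) (hf : Measurable f) :
    ∫⁻ x, g ‖x‖ * f (NormedSpace.normalize x) ∂μ =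
      (∫⁻ r : Ioi (0 : ℝ), g r ∂(.volumeIoiPow (finrank ℝ E - 1))) *
        ∫⁻ u : Metric.sphere (0 : E) 1, f u ∂μ.toSphere := by
  calc ∫⁻ x, g ‖x‖ * f (NormedSpace.normalize x) ∂μ
    _ = ∫⁻ x : ({0}ᶜ : Set E), g ‖(x : E)‖ * f (NormedSpace.normalize (x : E)) ∂(μ.comap (↑)) := by
      rw [lintegral_subtype_comap (measurableSet_singleton _).compl
        fun x ↦ g ‖x‖ * f (NormedSpace.normalize x), restrict_compl_singleton]
    _ = ∫⁻ p, f (p.1 : E) * g p.2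
          ∂(μ.toSphere.prod (.volumeIoiPow (finrank ℝ E - 1))) := by
      rw [← μ.measurePreserving_homeomorphUnitSphereProd.lintegral_comp_emb
        (Homeomorph.measurableEmbedding _)]
      simp only [homeomorphUnitSphereProd_apply_snd_coe, homeomorphUnitSphereProd_apply_fst_coe,
        NormedSpace.normalize, mul_comm]
    _ = _ := by
      rw [lintegral_prod_mul (f := fun u : Metric.sphere (0 : E) 1 ↦ f u)
        (g := fun r : Ioi (0 : ℝ) ↦ g r) (by fun_prop) (by fun_prop), mul_comm]

lemma map_normalize_withDensity_norm (μ : Measure E) [μ.IsAddHaarMeasure] {g : ℝ → ℝ≥0∞}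
    (hg : Measurable g) :
    (μ.withDensity fun x ↦ g ‖x‖).map NormedSpace.normalize =
      (∫⁻ r : Ioi (0 : ℝ), g r ∂(.volumeIoiPow (finrank ℝ E - 1))) •
        μ.toSphere.map ((↑) : Metric.sphere (0 : E) 1 → E) := by
  refine Measure.ext_of_lintegral _ fun f hf ↦ ?_
  rw [lintegral_map hf measurable_normalize,
    lintegral_withDensity_eq_lintegral_mul _ (by fun_prop)
      (show Measurable fun x ↦ f (NormedSpace.normalize x) from hf.comp measurable_normalize),
    lintegral_smul_measure, lintegral_map hf measurable_subtype_coe]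
  exact lintegral_norm_mul_normalize μ hg hf

end RadialDensity

section ComplexArgument

lemma lintegral_norm_mul_arg {g f : ℝ → ℝ≥0∞} (hg : Measurable g) (hf : Measurable f) :
    ∫⁻ z : ℂ, g ‖z‖ * f z.arg =
      (∫⁻ r in Ioi (0 : ℝ), ENNReal.ofReal r * g r) * ∫⁻ φ in Ioo (-π) π, f φ := by
  calc ∫⁻ z : ℂ, g ‖z‖ * f z.arg
    _ = ∫⁻ p in Ioi (0 : ℝ) ×ˢ Ioo (-π) π, ENNReal.ofReal p.1 * g p.1 * f p.2 := by
      rw [← Complex.lintegral_comp_polarCoord_symm]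
      refine setLIntegral_congr_fun (measurableSet_Ioi.prod measurableSet_Ioo) fun p hp ↦ ?_
      have hnorm : ‖Complex.polarCoord.symm p‖ = p.1 := by
        rw [Complex.norm_polarCoord_symm, abs_of_pos hp.1]
      have harg : (Complex.polarCoord.symm p).arg = p.2 := by
        rw [Complex.polarCoord_symm_apply, Complex.ofReal_cos, Complex.ofReal_sin,
          Complex.arg_mul_cos_add_sin_mul_I hp.1 (Ioo_subset_Ioc_self hp.2)]
      simp only [hnorm, harg, smul_eq_mul, mul_assoc]
    _ = _ := by
      rw [Measure.volume_eq_prod, ← Measure.prod_restrict,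
        lintegral_prod_mul (f := fun r : ℝ ↦ ENNReal.ofReal r * g r) (g := f) (by fun_prop)
          hf.aemeasurable]

lemma map_arg_withDensity_norm {g : ℝ → ℝ≥0∞} (hg : Measurable g) :
    ((volume : Measure ℂ).withDensity fun z ↦ g ‖z‖).map Complex.arg =
      (∫⁻ r in Ioi (0 : ℝ), ENNReal.ofReal r * g r) • volume.restrict (Ioo (-π) π) := by
  refine Measure.ext_of_lintegral _ fun f hf ↦ ?_
  rw [lintegral_map hf Complex.measurable_arg,
    lintegral_withDensity_eq_lintegral_mul _ (by fun_prop)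
      (show Measurable fun z : ℂ ↦ f z.arg from hf.comp Complex.measurable_arg),
    lintegral_smul_measure]
  exact lintegral_norm_mul_arg hg hf

end ComplexArgument

section StdGaussian

variable {E F : Type*}
  [NormedAddCommGroup E] [InnerProductSpace ℝ E] [FiniteDimensional ℝ E]
  [MeasurableSpace E] [BorelSpace E]
  [NormedAddCommGroup F] [InnerProductSpace ℝ F] [FiniteDimensional ℝ F]
  [MeasurableSpace F] [BorelSpace F]

/-- The density of the standard Gaussian measure on an `n`-dimensional Euclidean space, as a
function of the norm. -/
noncomputable def gaussianRadialDensity (n : ℕ) (r : ℝ) : ℝ :=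
  ((2 * π) ^ (n / 2 : ℝ))⁻¹ * exp (-(1 / 2) * r ^ 2)

lemma gaussianRadialDensity_nonneg (n : ℕ) (r : ℝ) : 0 ≤ gaussianRadialDensity n r := by
  unfold gaussianRadialDensity
  positivity

@[fun_prop]
lemma measurable_gaussianRadialDensity (n : ℕ) : Measurable (gaussianRadialDensity n) := by
  unfold gaussianRadialDensity
  fun_prop

lemma integrable_gaussianRadialDensity_norm :
    Integrable fun x : E ↦ gaussianRadialDensity (finrank ℝ E) ‖x‖ := by
  refine Integrable.const_mul (.of_integral_ne_zero ?_) _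
  rw [GaussianFourier.integral_rexp_neg_mul_sq_norm one_half_pos]
  positivity

lemma integral_gaussianRadialDensity_norm_mul_cexp_inner (t : E) :
    ∫ x : E, gaussianRadialDensity (finrank ℝ E) ‖x‖ * Complex.exp (⟪x, t⟫ * Complex.I) =
      Complex.exp (-‖t‖ ^ 2 / 2) := by
  have hK : ((π : ℂ) / (1 / 2 : ℂ)) ^ (finrank ℝ E / 2 : ℂ) =
      ((2 * π) ^ (finrank ℝ E / 2 : ℝ) : ℝ) := by
    rw [Complex.ofReal_cpow (by positivity)]
    push_cast
    ring_nf
  have hK_ne : (((2 * π) ^ (finrank ℝ E / 2 : ℝ) : ℝ) : ℂ) ≠ 0 :=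
    Complex.ofReal_ne_zero.2 (by positivity)
  calc ∫ x : E, gaussianRadialDensity (finrank ℝ E) ‖x‖ * Complex.exp (⟪x, t⟫ * Complex.I)
    _ = ∫ x : E, (((2 * π) ^ (finrank ℝ E / 2 : ℝ) : ℝ) : ℂ)⁻¹ *
          Complex.exp (-(1 / 2 : ℂ) * ‖x‖ ^ 2 + Complex.I * ⟪t, x⟫) := by
      congr with x
      rw [gaussianRadialDensity, Complex.exp_add, real_inner_comm, mul_comm Complex.I]
      push_cast
      ring
    _ = Complex.exp (Complex.I ^ 2 * ‖t‖ ^ 2 / (4 * (1 / 2))) := by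
      rw [integral_const_mul, GaussianFourier.integral_cexp_neg_mul_sq_norm_add (by norm_num), hK,
        inv_mul_cancel_left₀ hK_ne]
    _ = Complex.exp (-‖t‖ ^ 2 / 2) := by
      rw [Complex.I_sq]
      ring_nf

lemma stdGaussian_eq_withDensity :
    stdGaussian E =
      volume.withDensity fun x ↦ .ofReal (gaussianRadialDensity (finrank ℝ E) ‖x‖) := by
  have := isFiniteMeasure_withDensity_ofReal (integrable_gaussianRadialDensity_norm (E := E)).2
  refine Measure.ext_of_charFun (funext fun t ↦ ?_)
  rw [charFun_stdGaussian, charFun_apply,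
    integral_withDensity_eq_integral_toReal_smul (by fun_prop) (.of_forall fun x ↦ by simp)]
  simp only [ENNReal.toReal_ofReal (gaussianRadialDensity_nonneg _ _), Complex.real_smul,
    integral_gaussianRadialDensity_norm_mul_cexp_inner]

lemma stdGaussian_absolutelyContinuous : stdGaussian E ≪ volume := by
  rw [stdGaussian_eq_withDensity]
  exact withDensity_absolutelyContinuous _ _

lemma ae_stdGaussian_apply_ne_zero {G : Type*} [AddCommGroup G] [Module ℝ G] {S : E →ₗ[ℝ] G}
    (hS : S ≠ 0) : ∀ᵐ x ∂(stdGaussian E), S x ≠ 0 :=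
  stdGaussian_absolutelyContinuous.ae_le <| measure_eq_zero_iff_ae_notMem.1 <|
    Measure.addHaar_submodule volume (LinearMap.ker S) (mt LinearMap.ker_eq_top.1 hS)

variable (E) in
/-- The rotation-invariant probability measure on the unit sphere of `E`: the surface measure
divided by its total mass. It extends `uniformSphere` to spaces without chosen coordinates. -/
noncomputable def uniformUnitSphere : Measure (Metric.sphere (0 : E) 1) :=
  ((volume : Measure E).toSphere univ)⁻¹ • (volume : Measure E).toSphere

lemma map_normalize_stdGaussian [Nontrivial E] :
    (stdGaussian E).map NormedSpace.normalize = (uniformUnitSphere E).map (↑) := by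
  have hmap := map_normalize_withDensity_norm (volume : Measure E)
    (g := fun r ↦ ENNReal.ofReal (gaussianRadialDensity (finrank ℝ E) r)) (by fun_prop)
  rw [← stdGaussian_eq_withDensity] at hmap
  have : IsProbabilityMeasure ((stdGaussian E).map NormedSpace.normalize) :=
    Measure.isProbabilityMeasure_map measurable_normalize.aemeasurable
  rw [eq_inv_measure_univ_smul_of_eq_smul hmap, uniformUnitSphere, Measure.map_smul,
    Measure.map_apply measurable_subtype_coe .univ, preimage_univ]

lemma lintegral_normalize_stdGaussian [Nontrivial E] {f : E → ℝ≥0∞} (hf : Measurable f) :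
    ∫⁻ x, f (NormedSpace.normalize x) ∂(stdGaussian E) = ∫⁻ u, f u ∂(uniformUnitSphere E) := by
  rw [← lintegral_map hf measurable_normalize, map_normalize_stdGaussian,
    lintegral_map hf measurable_subtype_coe]

lemma map_arg_stdGaussian :
    (stdGaussian ℂ).map Complex.arg = cond volume (Ioo (-π) π) := by
  have hmap := map_arg_withDensity_norm
    (g := fun r ↦ ENNReal.ofReal (gaussianRadialDensity (finrank ℝ ℂ) r)) (by fun_prop)
  rw [← stdGaussian_eq_withDensity] at hmap
  have : IsProbabilityMeasure ((stdGaussian ℂ).map Complex.arg) :=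
    Measure.isProbabilityMeasure_map Complex.measurable_arg.aemeasurable
  rw [eq_inv_measure_univ_smul_of_eq_smul hmap, ProbabilityTheory.cond,
    Measure.restrict_apply_univ]

lemma charFunDual_map_inner_stdGaussian {ι : Type*} [Fintype ι] [DecidableEq ι] (a : ι → E)
    (ℓ : StrongDual ℝ (ι → ℝ)) :
    charFunDual ((stdGaussian E).map fun y i ↦ ⟪a i, y⟫) ℓ =
      Complex.exp (-((fun i ↦ ℓ (Pi.single i 1)) ⬝ᵥ gram ℝ a *ᵥ fun i ↦ ℓ (Pi.single i 1) : ℝ)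
        / 2) := by
  have hcomp : ℓ.comp (.pi fun i ↦ innerSL ℝ (a i)) =
      innerSL ℝ (∑ i, ℓ (Pi.single i 1) • a i) := by
    ext y
    simp only [ContinuousLinearMap.comp_apply, innerSL_apply_apply, sum_inner, inner_smul_left]
    rw [← ContinuousLinearMap.coe_coe ℓ, LinearMap.pi_apply_eq_sum_univ]
    simp [mul_comm, Pi.single_comm, ← Pi.single_apply]
  have hnorm : ‖∑ i, ℓ (Pi.single i 1) • a i‖ ^ 2 =
      (fun i ↦ ℓ (Pi.single i 1)) ⬝ᵥ gram ℝ a *ᵥ fun i ↦ ℓ (Pi.single i 1) := by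
    rw [← real_inner_self_eq_norm_sq, ← star_dotProduct_gram_mulVec, star_trivial]
  change charFunDual ((stdGaussian E).map (ContinuousLinearMap.pi fun i ↦ innerSL ℝ (a i))) ℓ = _
  rw [charFunDual_map, charFunDual_stdGaussian, hcomp, innerSL_apply_norm, ← hnorm,
    Complex.ofReal_pow]

lemma map_inner_stdGaussian_congr {ι : Type*} [Finite ι] {a : ι → E} {b : ι → F}
    (h : gram ℝ a = gram ℝ b) :
    (stdGaussian E).map (fun y i ↦ ⟪a i, y⟫) = (stdGaussian F).map (fun y i ↦ ⟪b i, y⟫) := by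
  classical
  have := Fintype.ofFinite ι
  refine Measure.ext_of_charFunDual (funext fun ℓ ↦ ?_)
  rw [charFunDual_map_inner_stdGaussian, charFunDual_map_inner_stdGaussian, h]

end StdGaussian

section Sector

variable {α φ : ℝ}

lemma cos_add_mul_cos_sub_neg_iff (hα₀ : 0 ≤ α) (hα : α ≤ π / 2) (hφ : |φ| ≤ π) :
    cos (φ + α) * cos (φ - α) < 0 ↔ |(π / 2 - |φ|)| < α := by
  have hφ' : |(π / 2 - |φ|)| ≤ π / 2 := by
    rw [abs_sub_le_iff]
    constructor <;> linarith [abs_nonneg φ]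
  have hprod : cos (φ + α) * cos (φ - α) = cos φ ^ 2 - sin α ^ 2 := by
    rw [cos_add, cos_sub]
    linear_combination cos φ ^ 2 * cos_sq_add_sin_sq α - sin α ^ 2 * cos_sq_add_sin_sq φ
  have hcos : |cos φ| = sin |(π / 2 - |φ|)| := by
    rw [← abs_sin_eq_sin_abs_of_abs_le_pi (hφ'.trans (half_le_self pi_nonneg)), sin_pi_div_two_sub,
      cos_abs]
  rw [hprod, sub_neg, sq_lt_sq, hcos,
    abs_of_nonneg (sin_nonneg_of_nonneg_of_le_pi hα₀ (by linarith))]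
  exact strictMonoOn_sin.lt_iff_lt ⟨by linarith [abs_nonneg (π / 2 - |φ|), pi_pos], hφ'⟩
    ⟨by linarith [pi_pos], hα⟩

lemma volume_Ioo_inter_cos_add_mul_cos_sub_neg (hα₀ : 0 ≤ α) (hα : α ≤ π / 2) :
    volume (Ioo (-π) π ∩ {φ | cos (φ + α) * cos (φ - α) < 0}) = .ofReal (4 * α) := by
  have hunion : Ioo (-π) π ∩ {φ | cos (φ + α) * cos (φ - α) < 0} =
      Ioo (-(π / 2) - α) (-(π / 2) + α) ∪ Ioo (π / 2 - α) (π / 2 + α) := by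
    ext φ
    constructor
    · rintro ⟨hφ, hneg⟩
      rw [mem_ofPred_eq, cos_add_mul_cos_sub_neg_iff hα₀ hα (abs_le.2 ⟨hφ.1.le, hφ.2.le⟩),
        abs_lt] at hneg
      rcases abs_cases φ with ⟨habs, -⟩ | ⟨habs, -⟩ <;> rw [habs] at hneg
      · exact .inr ⟨by linarith, by linarith⟩
      · exact .inl ⟨by linarith, by linarith⟩
    · intro hφ
      have hφπ : φ ∈ Ioo (-π) π := by
        rcases hφ with ⟨h₁, h₂⟩ | ⟨h₁, h₂⟩ <;> constructor <;> linarith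
      refine ⟨hφπ, ?_⟩
      rw [mem_ofPred_eq, cos_add_mul_cos_sub_neg_iff hα₀ hα (abs_le.2 ⟨hφπ.1.le, hφπ.2.le⟩), abs_lt]
      rcases hφ with ⟨h₁, h₂⟩ | ⟨h₁, h₂⟩
      · rw [abs_of_neg (show φ < 0 by linarith)]
        constructor <;> linarith
      · rw [abs_of_pos (show 0 < φ by linarith)]
        constructor <;> linarith
  have hdisj : Disjoint (Ioo (-(π / 2) - α) (-(π / 2) + α)) (Ioo (π / 2 - α) (π / 2 + α)) :=
    disjoint_left.2 fun φ h₁ h₂ ↦ by linarith [h₁.2, h₂.1]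
  rw [hunion, measure_union hdisj measurableSet_Ioo, volume_Ioo, volume_Ioo,
    ← ENNReal.ofReal_add (by linarith) (by linarith)]
  ring_nf

lemma inner_exp_mul_I_exp_mul_I (θ φ : ℝ) :
    ⟪Complex.exp (θ * Complex.I), Complex.exp (φ * Complex.I)⟫ = cos (φ - θ) := by
  rw [Complex.inner, ← Complex.exp_conj, ← Complex.exp_add, map_mul, Complex.conj_ofReal,
    Complex.conj_I, ← Complex.exp_ofReal_mul_I_re]
  push_cast
  ring_nf

lemma inner_exp_mul_I (θ : ℝ) (z : ℂ) :
    ⟪Complex.exp (θ * Complex.I), z⟫ = ‖z‖ * cos (z.arg - θ) := by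
  calc ⟪Complex.exp (θ * Complex.I), z⟫
    _ = ⟪Complex.exp (θ * Complex.I), ‖z‖ • Complex.exp (z.arg * Complex.I)⟫ := by
      rw [Complex.real_smul, Complex.norm_mul_exp_arg_mul_I]
    _ = ‖z‖ * cos (z.arg - θ) := by
      rw [real_inner_smul_right, inner_exp_mul_I_exp_mul_I]

lemma stdGaussian_inner_mul_inner_exp_neg (hα₀ : 0 ≤ α) (hα : α ≤ π / 2) :
    stdGaussian ℂ {z | ⟪Complex.exp ((-α : ℝ) * Complex.I), z⟫ *
      ⟪Complex.exp (α * Complex.I), z⟫ < 0} = .ofReal (2 * α / π) := by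
  have hset : {z | ⟪Complex.exp ((-α : ℝ) * Complex.I), z⟫ *
      ⟪Complex.exp (α * Complex.I), z⟫ < 0} =
        Complex.arg ⁻¹' {φ | cos (φ + α) * cos (φ - α) < 0} := by
    ext z
    rw [mem_preimage, mem_ofPred_eq, mem_ofPred_eq, inner_exp_mul_I, inner_exp_mul_I,
      mul_mul_mul_comm, sub_neg_eq_add]
    rcases eq_or_ne z 0 with rfl | hz
    · simpa using mul_self_nonneg (cos α)
    · have hnorm : 0 < ‖z‖ * ‖z‖ := by positivity
      exact smul_neg_iff_of_pos_left hnorm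
  have hmeas : MeasurableSet {φ | cos (φ + α) * cos (φ - α) < 0} :=
    measurableSet_lt (by fun_prop) (by fun_prop)
  rw [hset, ← Measure.map_apply Complex.measurable_arg hmeas, map_arg_stdGaussian,
    cond_apply measurableSet_Ioo, volume_Ioo_inter_cos_add_mul_cos_sub_neg hα₀ hα, volume_Ioo,
    mul_comm, ← div_eq_mul_inv, ← ENNReal.ofReal_div_of_pos (by linarith [pi_pos])]
  congr 1
  ring

end Sector

section Angle

variable {E F : Type*} [NormedAddCommGroup E] [InnerProductSpace ℝ E]
  [NormedAddCommGroup F] [InnerProductSpace ℝ F]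

lemma gram_pair (a b : E) : gram ℝ ![a, b] = !![‖a‖ ^ 2, ⟪a, b⟫; ⟪a, b⟫, ‖b‖ ^ 2] := by
  ext i j
  fin_cases i <;> fin_cases j <;> simp [gram_apply, real_inner_comm a b]

-- The two planar vectors lie symmetrically about the real axis, so that they disagree on arguments
-- near `±π / 2` and the branch cut of `Complex.arg` stays out of the way.
lemma gram_pair_eq_gram_exp_angle (a b : E) :
    gram ℝ ![a, b] = gram ℝ ![‖a‖ • Complex.exp ((-(angle a b / 2) : ℝ) * Complex.I),
      ‖b‖ • Complex.exp ((angle a b / 2 : ℝ) * Complex.I)] := by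
  rw [gram_pair, gram_pair, norm_smul, norm_smul, Complex.norm_exp_ofReal_mul_I,
    Complex.norm_exp_ofReal_mul_I, norm_norm, norm_norm, mul_one, mul_one, real_inner_smul_left,
    real_inner_smul_right, inner_exp_mul_I_exp_mul_I, sub_neg_eq_add, add_halves,
    ← cos_angle_mul_norm_mul_norm, mul_comm (cos _), mul_assoc]

lemma angle_apply_normalize (S T : E →ₗ[ℝ] F) (x : E) :
    angle (S (NormedSpace.normalize x)) (T (NormedSpace.normalize x)) = angle (S x) (T x) := by
  rcases eq_or_ne x 0 with rfl | hx
  · rw [NormedSpace.normalize_zero_eq_zero]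
  · rw [NormedSpace.normalize, map_smul, map_smul, angle_smul_smul (by positivity)]

end Angle

section Disagreement

variable {E F : Type*}
  [NormedAddCommGroup E] [InnerProductSpace ℝ E] [FiniteDimensional ℝ E]
  [MeasurableSpace E] [BorelSpace E]
  [NormedAddCommGroup F] [InnerProductSpace ℝ F] [FiniteDimensional ℝ F]
  [MeasurableSpace F] [BorelSpace F]

lemma measurable_real_sign : Measurable Real.sign :=
  .ite measurableSet_Iio measurable_const (.ite measurableSet_Ioi measurable_const measurable_const)

lemma sign_ne_sign_iff_mul_neg {x y : ℝ} (hx : x ≠ 0) (hy : y ≠ 0) :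
    Real.sign x ≠ Real.sign y ↔ x * y < 0 := by
  rw [mul_neg_iff]
  rcases hx.lt_or_gt with hx | hx <;> rcases hy.lt_or_gt with hy | hy <;>
    norm_num [Real.sign_of_neg, Real.sign_of_pos, hx, hy, hx.le, hy.le]

lemma stdGaussian_sign_inner_ne {a b : E} (ha : a ≠ 0) (hb : b ≠ 0) :
    stdGaussian E {y | Real.sign ⟪a, y⟫ ≠ Real.sign ⟪b, y⟫} = .ofReal (angle a b / π) := by
  have hae {v : E} (hv : v ≠ 0) : ∀ᵐ y ∂(stdGaussian E), ⟪v, y⟫ ≠ 0 :=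
    ae_stdGaussian_apply_ne_zero (S := innerₗ E v) fun h ↦
      hv (inner_self_eq_zero.1 (LinearMap.congr_fun h v))
  have hneg : MeasurableSet {p : Fin 2 → ℝ | p 0 * p 1 < 0} :=
    measurableSet_lt (by fun_prop) (by fun_prop)
  calc stdGaussian E {y | Real.sign ⟪a, y⟫ ≠ Real.sign ⟪b, y⟫}
    _ = stdGaussian E {y | ⟪a, y⟫ * ⟪b, y⟫ < 0} := by
      refine measure_congr ?_
      filter_upwards [hae ha, hae hb] with y hay hby
      exact propext (sign_ne_sign_iff_mul_neg hay hby)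
    _ = stdGaussian ℂ {z | ⟪‖a‖ • Complex.exp ((-(angle a b / 2) : ℝ) * Complex.I), z⟫ *
          ⟪‖b‖ • Complex.exp ((angle a b / 2 : ℝ) * Complex.I), z⟫ < 0} := by
      have h := congr($(map_inner_stdGaussian_congr (gram_pair_eq_gram_exp_angle a b))
        {p : Fin 2 → ℝ | p 0 * p 1 < 0})
      rwa [Measure.map_apply (by fun_prop) hneg, Measure.map_apply (by fun_prop) hneg] at h
    _ = stdGaussian ℂ {z | ⟪Complex.exp ((-(angle a b / 2) : ℝ) * Complex.I), z⟫ *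
          ⟪Complex.exp ((angle a b / 2 : ℝ) * Complex.I), z⟫ < 0} := by
      congr 1 with z
      have hnorm : 0 < ‖a‖ * ‖b‖ := by positivity
      rw [mem_ofPred_eq, real_inner_smul_left, real_inner_smul_left, mul_mul_mul_comm]
      exact smul_neg_iff_of_pos_left hnorm
    _ = .ofReal (angle a b / π) := by
      rw [stdGaussian_inner_mul_inner_exp_neg (by linarith [angle_nonneg a b])
        (by linarith [angle_le_pi a b]), mul_div_cancel₀ _ two_ne_zero]

lemma measurableSet_sign_inner_ne (S T : E →ₗ[ℝ] F) :
    MeasurableSet {p : E × F | Real.sign ⟪S p.1, p.2⟫ ≠ Real.sign ⟪T p.1, p.2⟫} := by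
  have hmeas (R : E →ₗ[ℝ] F) : Measurable fun p : E × F ↦ Real.sign ⟪R p.1, p.2⟫ :=
    measurable_real_sign.comp
      ((R.continuous_of_finiteDimensional.comp continuous_fst).inner continuous_snd).measurable
  exact (measurableSet_eq_fun (hmeas S) (hmeas T)).compl

lemma measurable_angle_apply (S T : E →ₗ[ℝ] F) : Measurable fun x ↦ angle (S x) (T x) := by
  have hS := S.continuous_of_finiteDimensional.measurable
  have hT := T.continuous_of_finiteDimensional.measurable
  unfold angle
  fun_prop

lemma stdGaussian_prod_sign_inner_ne {S T : E →ₗ[ℝ] F} (hS : S ≠ 0) (hT : T ≠ 0) :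
    ((stdGaussian E).prod (stdGaussian F))
        {p | Real.sign ⟪S p.1, p.2⟫ ≠ Real.sign ⟪T p.1, p.2⟫} =
      ∫⁻ x, .ofReal (angle (S x) (T x) / π) ∂(stdGaussian E) := by
  rw [Measure.prod_apply (measurableSet_sign_inner_ne S T)]
  refine lintegral_congr_ae ?_
  filter_upwards [ae_stdGaussian_apply_ne_zero hS, ae_stdGaussian_apply_ne_zero hT] with x hSx hTx
  exact stdGaussian_sign_inner_ne hSx hTx

theorem stmt_11_general {S T : E →ₗ[ℝ] F} (hS : S ≠ 0) (hT : T ≠ 0) :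
    ((stdGaussian E).prod (stdGaussian F)).real
        {p | Real.sign ⟪S p.1, p.2⟫ ≠ Real.sign ⟪T p.1, p.2⟫} =
      (1 / π) * ∫ u : Metric.sphere (0 : E) 1, angle (S u) (T u) ∂(uniformUnitSphere E) := by
  have : Nontrivial E := by
    obtain ⟨x, hx⟩ := DFunLike.ne_iff.1 hS
    exact nontrivial_of_ne x 0 fun h ↦ hx (by simp [h])
  have hmeas : Measurable fun x ↦ angle (S x) (T x) / π :=
    (measurable_angle_apply S T).div_const π
  rw [measureReal_def, stdGaussian_prod_sign_inner_ne hS hT, ← integral_const_mul,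
    integral_eq_lintegral_of_nonneg_ae]
  · simp only [one_div_mul_eq_div]
    rw [← lintegral_normalize_stdGaussian (f := fun x ↦ .ofReal (angle (S x) (T x) / π))
      hmeas.ennreal_ofReal]
    simp only [angle_apply_normalize]
  · exact .of_forall fun u ↦ mul_nonneg (by positivity) (angle_nonneg _ _)
  · exact ((measurable_angle_apply S T).comp measurable_subtype_coe).const_mul _
      |>.aestronglyMeasurable

lemma stdGaussian_prod_real_sign_inner_ne_linearIsometry (S T : E →ₗᵢ[ℝ] F) :
    ((stdGaussian E).prod (stdGaussian F)).real
        {p | Real.sign ⟪S p.1, p.2⟫ ≠ Real.sign ⟪T p.1, p.2⟫} =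
      (1 / π) * ∫ u : Metric.sphere (0 : E) 1, arccos ⟪S u, T u⟫ ∂(uniformUnitSphere E) := by
  rcases subsingleton_or_nontrivial E with hE | hE
  · have hzero (x : E) : x = 0 := Subsingleton.elim x 0
    simp [hzero, Measure.eq_zero_of_isEmpty]
  · have hne (R : E →ₗᵢ[ℝ] F) : R.toLinearMap ≠ 0 := by
      obtain ⟨x, hx⟩ := exists_ne (0 : E)
      exact fun h ↦ hx (R.injective (by simpa using LinearMap.congr_fun h x))
    refine (stmt_11_general (hne S) (hne T)).trans ?_
    simp [angle, S.norm_map, T.norm_map]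

end Disagreement

section Matrix

variable {m n p : Type*} [Fintype m] [Fintype n] [Fintype p] [DecidableEq m] [DecidableEq p]

lemma inner_toEuclideanLin_transpose (U : Matrix m n ℝ) (x : EuclideanSpace ℝ m)
    (y : EuclideanSpace ℝ n) :
    ⟪toEuclideanLin Uᵀ x, y⟫ = ∑ i, ∑ j, x i * U i j * y j := by
  rw [EuclideanSpace.inner_eq_star_dotProduct, ofLp_toLpLin, toLin'_apply, star_trivial,
    mulVec_transpose, dotProduct_comm, ← dotProduct_mulVec]
  simp only [dotProduct, mulVec, Finset.mul_sum, mul_assoc]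

lemma inner_toEuclideanLin_transpose_toEuclideanLin_transpose (U : Matrix m n ℝ)
    (V : Matrix p n ℝ) (x : EuclideanSpace ℝ m) (y : EuclideanSpace ℝ p) :
    ⟪toEuclideanLin Uᵀ x, toEuclideanLin Vᵀ y⟫ = ∑ i, ∑ j, x i * (U * Vᵀ) i j * y j := by
  rw [← inner_toEuclideanLin_transpose, transpose_mul, transpose_transpose]
  simp only [EuclideanSpace.inner_eq_star_dotProduct, ofLp_toLpLin, toLin'_apply, star_trivial,
    ← mulVec_mulVec, mulVec_transpose V, dotProduct_mulVec]

lemma norm_toEuclideanLin_transpose {U : Matrix m m ℝ} (hU : U ∈ orthogonalGroup m ℝ)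
    (x : EuclideanSpace ℝ m) : ‖toEuclideanLin Uᵀ x‖ = ‖x‖ := by
  rw [← sq_eq_sq₀ (norm_nonneg _) (norm_nonneg _), ← real_inner_self_eq_norm_sq,
    inner_toEuclideanLin_transpose_toEuclideanLin_transpose, (mem_orthogonalGroup_iff m ℝ).1 hU,
    ← inner_toEuclideanLin_transpose, transpose_one, ← real_inner_self_eq_norm_sq]
  simp

end Matrix

section Coordinates

variable {m n : Type*} [Fintype m] [Fintype n]

lemma measurePreserving_toLp_stdGaussian :
    MeasurePreserving (WithLp.toLp 2) (Measure.pi fun _ : m ↦ gaussianReal 0 1)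
      (stdGaussian (EuclideanSpace ℝ m)) :=
  ⟨by fun_prop, map_pi_eq_stdGaussian⟩

lemma measurePreserving_toLp_inl_inr :
    MeasurePreserving (fun x : m ⊕ n → ℝ ↦
        (WithLp.toLp 2 fun i ↦ x (.inl i), WithLp.toLp 2 fun j ↦ x (.inr j)))
      (Measure.pi fun _ ↦ gaussianReal 0 1)
      ((stdGaussian (EuclideanSpace ℝ m)).prod (stdGaussian (EuclideanSpace ℝ n))) :=
  (measurePreserving_toLp_stdGaussian.prod measurePreserving_toLp_stdGaussian).comp
    (measurePreserving_sumPiEquivProdPi fun _ : m ⊕ n ↦ gaussianReal 0 1)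

lemma pi_gaussianReal_real_sign_sum_ne [DecidableEq m] (U V : Matrix m n ℝ) :
    (Measure.pi fun _ : m ⊕ n ↦ gaussianReal 0 1).real
        {x | Real.sign (∑ i, ∑ j, x (.inl i) * U i j * x (.inr j)) ≠
          Real.sign (∑ i, ∑ j, x (.inl i) * V i j * x (.inr j))} =
      ((stdGaussian (EuclideanSpace ℝ m)).prod (stdGaussian (EuclideanSpace ℝ n))).real
        {p | Real.sign ⟪toEuclideanLin Uᵀ p.1, p.2⟫ ≠
          Real.sign ⟪toEuclideanLin Vᵀ p.1, p.2⟫} := by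
  rw [← measurePreserving_toLp_inl_inr.measureReal_preimage
    (measurableSet_sign_inner_ne _ _).nullMeasurableSet]
  simp only [inner_toEuclideanLin_transpose]
  rfl

end Coordinates

/-- For orthogonal `U, V` and `x ∼ N(0, I_{2d})`, with `h_U(x) = sign(x_{1:d}ᵀ U x_{d+1:2d})`,
`P(h_U(x) ≠ h_V(x)) = (1/π) · E_{u ∼ Uniform(S^{d-1})}[arccos(uᵀ U Vᵀ u)]`. -/
theorem stmt_11 (d : ℕ) (U V : Matrix (Fin d) (Fin d) ℝ)
    (hU : U ∈ Matrix.orthogonalGroup (Fin d) ℝ)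
    (hV : V ∈ Matrix.orthogonalGroup (Fin d) ℝ) :
    (stdGaussian2 d {x | Real.sign (∑ i, ∑ j, x (Sum.inl i) * U i j * x (Sum.inr j))
        ≠ Real.sign (∑ i, ∑ j, x (Sum.inl i) * V i j * x (Sum.inr j))}).toReal
      = (1 / Real.pi) *
        ∫ u : Metric.sphere (0 : EuclideanSpace ℝ (Fin d)) 1,
          Real.arccos (∑ i, ∑ j,
            (EuclideanSpace.equiv (Fin d) ℝ (u : EuclideanSpace ℝ (Fin d))) i
              * (U * Vᵀ) i j
              * (EuclideanSpace.equiv (Fin d) ℝ (u : EuclideanSpace ℝ (Fin d))) j)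
          ∂(uniformSphere d) := by
  calc _
    _ = (1 / π) * ∫ u : Metric.sphere (0 : EuclideanSpace ℝ (Fin d)) 1,
          arccos ⟪toEuclideanLin Uᵀ u, toEuclideanLin Vᵀ u⟫ ∂(uniformUnitSphere _) :=
      (pi_gaussianReal_real_sign_sum_ne U V).trans <|
        stdGaussian_prod_real_sign_inner_ne_linearIsometry
          ⟨_, norm_toEuclideanLin_transpose hU⟩ ⟨_, norm_toEuclideanLin_transpose hV⟩
    _ = _ := by
      simp only [inner_toEuclideanLin_transpose_toEuclideanLin_transpose]
      rfl
end

section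
/- There exists a constant C₁ > 0 such that for all d and all U, V ∈ O(d), P_{x ∼ N(0,I_{2d})}( sign(x_{1:d}ᵀ U x_{d+1:2d}) ≠ sign(x_{1:d}ᵀ V x_{d+1:2d}) ) ≥ C₁ ‖U − V‖_F / √d. -/
open MeasureTheory ProbabilityTheory

/-!
Given `x`, the forms `S = xᵀUy` and `T = xᵀVy` are jointly Gaussian in `y` with the same variance
`‖Uᵀx‖² = ‖Vᵀx‖²`, so `S + T` and `S - T` are independent. The forms have opposite signs as soon
as `|S + T| < |S - T|`, and comparing both sides with the standard deviation of `S - T` shows that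
this has conditional probability at least a constant times `‖(U - V)ᵀx‖ / ‖Uᵀx‖`.
It remains to bound `E[a / b]` below for `a = ‖(U - V)ᵀx‖` and `b = ‖Uᵀx‖`, each divided by its
root mean square. Expanding `0 ≤ (a / b)(1 - ab / M)²` and bounding `a³b` by the AM-GM inequality
leaves only second and fourth moments, and the fourth moment of a Gaussian norm is at most three
times the square of its second moment, so `M = 3` gives `E[a / b] ≥ 1 / 3`.
-/

open Matrix WithLp
open scoped NNReal RealInnerProductSpace

variable {Ω : Type*} {mΩ : MeasurableSpace Ω} {P : Measure Ω}

lemma integral_pow_four_mul_exp_neg_mul_sq {b : ℝ} (hb : 0 < b) :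
    ∫ t : ℝ, t ^ 4 * Real.exp (-b * t ^ 2) = 3 / (4 * b ^ 2) * √(Real.pi / b) := by
  have hΓ : Real.Gamma (5 / 2) = 3 * √Real.pi / 4 := by
    convert! Real.Gamma_nat_add_half 2 using 1 <;> norm_num [Nat.doubleFactorial]
  have hpow : b ^ (-(5 / 2) : ℝ) = (b ^ 2 * √b)⁻¹ := by
    rw [Real.rpow_neg hb.le, show (5 / 2 : ℝ) = 2 + 1 / 2 by norm_num, Real.rpow_add hb,
      Real.rpow_two, Real.sqrt_eq_rpow]
  have hIoi : ∫ t in Set.Ioi (0 : ℝ), t ^ 4 * Real.exp (-b * t ^ 2) =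
      b ^ (-(5 / 2) : ℝ) * (1 / 2) * Real.Gamma (5 / 2) := by
    have h := integral_rpow_mul_exp_neg_mul_rpow (p := 2) (q := 4) two_pos (by norm_num) hb
    norm_num at h ⊢
    exact_mod_cast h
  calc ∫ t : ℝ, t ^ 4 * Real.exp (-b * t ^ 2)
      = ∫ t : ℝ, |t| ^ 4 * Real.exp (-b * |t| ^ 2) := by
        simp only [sq_abs, Even.pow_abs (show Even 4 by decide)]
    _ = 2 * ((b ^ 2 * √b)⁻¹ * (1 / 2) * (3 * √Real.pi / 4)) := by
        rw [integral_comp_abs (f := fun t => t ^ 4 * Real.exp (-b * t ^ 2)), hIoi, hΓ, hpow]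
    _ = 3 / (4 * b ^ 2) * √(Real.pi / b) := by
        rw [Real.sqrt_div' _ hb.le]
        field_simp

lemma integral_pow_four_gaussianReal (v : ℝ≥0) : ∫ t, t ^ 4 ∂gaussianReal 0 v = 3 * v ^ 2 := by
  obtain rfl | hv := eq_or_ne v 0
  · simp
  calc ∫ t, t ^ 4 ∂gaussianReal 0 v
      = (√(2 * Real.pi * v))⁻¹ * ∫ t : ℝ, t ^ 4 * Real.exp (-(2 * (v : ℝ))⁻¹ * t ^ 2) := by
        rw [integral_gaussianReal_eq_integral_smul hv, ← integral_const_mul]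
        refine integral_congr_ae (.of_forall fun t => ?_)
        simp only [gaussianPDFReal, smul_eq_mul, sub_zero]
        rw [neg_div, div_eq_inv_mul, neg_mul]
        ring
    _ = 3 * v ^ 2 := by
        rw [integral_pow_four_mul_exp_neg_mul_sq (by positivity), div_inv_eq_mul,
          show Real.pi * (2 * v) = 2 * Real.pi * v by ring]
        field_simp
        norm_num

lemma integral_pow_four_of_hasGaussianLaw {X : Ω → ℝ} (hX : HasGaussianLaw X P)
    (hX₀ : P[X] = 0) : ∫ ω, X ω ^ 4 ∂P = 3 * (∫ ω, X ω ^ 2 ∂P) ^ 2 := by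
  rw [← variance_of_integral_eq_zero hX.aemeasurable hX₀,
    ← integral_map (f := fun t : ℝ => t ^ 4) hX.aemeasurable (by fun_prop),
    hX.map_eq_gaussianReal, hX₀, integral_pow_four_gaussianReal,
    Real.coe_toNNReal _ (variance_nonneg X P)]

lemma memLp_sq_of_hasGaussianLaw {X : Ω → ℝ} (hX : HasGaussianLaw X P) :
    MemLp (fun ω => X ω ^ 2) 2 P := by
  rw [memLp_two_iff_integrable_sq (by have := hX.aemeasurable; fun_prop)]
  have h := (hX.memLp (p := 4) (by simp)).integrable_norm_pow (p := 4) (by simp)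
  simpa [← pow_mul, Even.pow_abs (show Even 4 by decide)] using h

lemma integral_sq_mul_sq_le_of_hasGaussianLaw {X Y : Ω → ℝ} (hX : HasGaussianLaw X P)
    (hY : HasGaussianLaw Y P) (hX₀ : P[X] = 0) (hY₀ : P[Y] = 0) :
    ∫ ω, X ω ^ 2 * Y ω ^ 2 ∂P ≤ 3 * ((∫ ω, X ω ^ 2 ∂P) * ∫ ω, Y ω ^ 2 ∂P) := by
  have hCS := integral_mul_le_Lp_mul_Lq_of_nonneg (μ := P) Real.HolderConjugate.two_two
    (.of_forall fun ω => sq_nonneg (X ω)) (.of_forall fun ω => sq_nonneg (Y ω))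
    (by simpa using memLp_sq_of_hasGaussianLaw hX) (by simpa using memLp_sq_of_hasGaussianLaw hY)
  simp only [Real.rpow_two, ← pow_mul, ← Real.sqrt_eq_rpow, Nat.reduceMul] at hCS
  rwa [integral_pow_four_of_hasGaussianLaw hX hX₀, integral_pow_four_of_hasGaussianLaw hY hY₀,
    ← Real.sqrt_mul (by positivity), mul_mul_mul_comm, ← sq, ← mul_pow, ← mul_pow,
    Real.sqrt_sq (by positivity)] at hCS

lemma integral_norm_pow_four_le_of_hasGaussianLaw {E : Type*} [NormedAddCommGroup E]
    [InnerProductSpace ℝ E] [FiniteDimensional ℝ E] [MeasurableSpace E] [BorelSpace E]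
    {X : Ω → E} (hX : HasGaussianLaw X P) (hX₀ : P[X] = 0) :
    ∫ ω, ‖X ω‖ ^ 4 ∂P ≤ 3 * (∫ ω, ‖X ω‖ ^ 2 ∂P) ^ 2 := by
  let b := stdOrthonormalBasis ℝ E
  have hcoord i : HasGaussianLaw (fun ω => ⟪b i, X ω⟫) P := hX.map_fun (innerSL ℝ (b i))
  have hcoord₀ i : ∫ ω, ⟪b i, X ω⟫ ∂P = 0 := by
    rw [integral_inner hX.integrable, hX₀, inner_zero_right]
  have hint i j : Integrable (fun ω => ⟪b i, X ω⟫ ^ 2 * ⟪b j, X ω⟫ ^ 2) P :=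
    (memLp_sq_of_hasGaussianLaw (hcoord i)).integrable_mul (memLp_sq_of_hasGaussianLaw (hcoord j))
  calc ∫ ω, ‖X ω‖ ^ 4 ∂P
      = ∫ ω, ∑ i, ∑ j, ⟪b i, X ω⟫ ^ 2 * ⟪b j, X ω⟫ ^ 2 ∂P := by
        simp only [← Finset.sum_mul_sum, b.sum_sq_inner_right, ← pow_add]
    _ = ∑ i, ∑ j, ∫ ω, ⟪b i, X ω⟫ ^ 2 * ⟪b j, X ω⟫ ^ 2 ∂P := by
        rw [integral_finsetSum _ fun i _ => integrable_finsetSum _ fun j _ => hint i j]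
        exact Finset.sum_congr rfl fun i _ => integral_finsetSum _ fun j _ => hint i j
    _ ≤ ∑ i, ∑ j, 3 * ((∫ ω, ⟪b i, X ω⟫ ^ 2 ∂P) * ∫ ω, ⟪b j, X ω⟫ ^ 2 ∂P) := by
        gcongr with i _ j _
        exact integral_sq_mul_sq_le_of_hasGaussianLaw (hcoord i) (hcoord j) (hcoord₀ i) (hcoord₀ j)
    _ = 3 * (∫ ω, ‖X ω‖ ^ 2 ∂P) ^ 2 := by
        simp only [← Finset.mul_sum, ← b.sum_sq_inner_right]
        rw [integral_finsetSum _ fun i _ => (hcoord i).memLp_two.integrable_sq, sq,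
          Finset.sum_mul_sum]
        simp only [Finset.mul_sum]

lemma sub_le_div_of_nonneg {a b M : ℝ} (ha : 0 ≤ a) (hb : 0 ≤ b) (hab : b = 0 → a = 0)
    (hM : 0 < M) : 2 / M * a ^ 2 - (3 * a ^ 4 + b ^ 4) / (4 * M ^ 2) ≤ a / b := by
  obtain rfl | hb := hb.eq_or_lt
  · simp [hab rfl]
  have hsq : 0 ≤ a / b * (1 - a * b / M) ^ 2 := by positivity
  have hexpand : a / b * (1 - a * b / M) ^ 2 = a / b - 2 / M * a ^ 2 + a ^ 3 * b / M ^ 2 := by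
    field_simp
    ring
  have hamgm : 4 * (a ^ 3 * b) ≤ 3 * a ^ 4 + b ^ 4 := by
    nlinarith [mul_nonneg (sq_nonneg (a - b)) (sq_nonneg (a + b)),
      mul_nonneg (sq_nonneg (a - b)) (sq_nonneg a)]
  have hdiv : a ^ 3 * b / M ^ 2 ≤ (3 * a ^ 4 + b ^ 4) / (4 * M ^ 2) := by
    rw [← mul_div_mul_left _ (M ^ 2) four_ne_zero]
    gcongr
  linarith

section Ratio

variable [IsFiniteMeasure P] {A B : Ω → ℝ} {M : ℝ}

lemma inv_le_integral_div_of_integral_sq_eq_one (hA : ∀ ω, 0 ≤ A ω) (hB : ∀ ω, 0 ≤ B ω)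
    (hAB : ∀ ω, B ω = 0 → A ω = 0) (hM : 0 < M) (hA₄ : MemLp A 4 P) (hB₄ : MemLp B 4 P)
    (hA₂ : ∫ ω, A ω ^ 2 ∂P = 1) (hAM : ∫ ω, A ω ^ 4 ∂P ≤ M) (hBM : ∫ ω, B ω ^ 4 ∂P ≤ M)
    (hint : Integrable (fun ω => A ω / B ω) P) : M⁻¹ ≤ ∫ ω, A ω / B ω ∂P := by
  have hA₂_int : Integrable (fun ω => A ω ^ 2) P := (hA₄.mono_exponent (by norm_num)).integrable_sq
  have hA₄_int : Integrable (fun ω => A ω ^ 4) P := by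
    simpa [abs_of_nonneg (hA _)] using hA₄.integrable_norm_pow (p := 4) (by simp)
  have hB₄_int : Integrable (fun ω => B ω ^ 4) P := by
    simpa [abs_of_nonneg (hB _)] using hB₄.integrable_norm_pow (p := 4) (by simp)
  have hquartic : Integrable (fun ω => 3 * A ω ^ 4 + B ω ^ 4) P :=
    (hA₄_int.const_mul 3).add hB₄_int
  calc M⁻¹ = 2 / M * 1 - (3 * M + M) / (4 * M ^ 2) := by field_simp; ring
    _ ≤ 2 / M * ∫ ω, A ω ^ 2 ∂P -
        (3 * ∫ ω, A ω ^ 4 ∂P + ∫ ω, B ω ^ 4 ∂P) / (4 * M ^ 2) := by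
        rw [hA₂]
        gcongr
    _ = ∫ ω, 2 / M * A ω ^ 2 - (3 * A ω ^ 4 + B ω ^ 4) / (4 * M ^ 2) ∂P := by
        rw [integral_sub (hA₂_int.const_mul _) (hquartic.div_const _), integral_const_mul,
          integral_div, integral_add (hA₄_int.const_mul 3) hB₄_int, integral_const_mul]
    _ ≤ ∫ ω, A ω / B ω ∂P :=
        integral_mono ((hA₂_int.const_mul _).sub (hquartic.div_const _)) hint
          fun ω => sub_le_div_of_nonneg (hA ω) (hB ω) (hAB ω) hM

lemma sqrt_div_sqrt_le_integral_div (hA : ∀ ω, 0 ≤ A ω) (hB : ∀ ω, 0 ≤ B ω)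
    (hAB : ∀ ω, B ω = 0 → A ω = 0) (hM : 0 < M) (hA₄ : MemLp A 4 P) (hB₄ : MemLp B 4 P)
    (hAM : ∫ ω, A ω ^ 4 ∂P ≤ M * (∫ ω, A ω ^ 2 ∂P) ^ 2)
    (hBM : ∫ ω, B ω ^ 4 ∂P ≤ M * (∫ ω, B ω ^ 2 ∂P) ^ 2)
    (hint : Integrable (fun ω => A ω / B ω) P) :
    M⁻¹ * (√(∫ ω, A ω ^ 2 ∂P) / √(∫ ω, B ω ^ 2 ∂P)) ≤ ∫ ω, A ω / B ω ∂P := by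
  have hα₂ : √(∫ ω, A ω ^ 2 ∂P) ^ 2 = ∫ ω, A ω ^ 2 ∂P := Real.sq_sqrt (by positivity)
  have hβ₂ : √(∫ ω, B ω ^ 2 ∂P) ^ 2 = ∫ ω, B ω ^ 2 ∂P := Real.sq_sqrt (by positivity)
  have hdiv : 0 ≤ ∫ ω, A ω / B ω ∂P := integral_nonneg fun ω => div_nonneg (hA ω) (hB ω)
  set α := √(∫ ω, A ω ^ 2 ∂P)
  set β := √(∫ ω, B ω ^ 2 ∂P)
  obtain hα | hα : 0 = α ∨ 0 < α := (Real.sqrt_nonneg _).eq_or_lt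
  · simpa [← hα] using hdiv
  obtain hβ | hβ : 0 = β ∨ 0 < β := (Real.sqrt_nonneg _).eq_or_lt
  · simpa [← hβ] using hdiv
  have hratio (ω : Ω) : A ω / α / (B ω / β) = β / α * (A ω / B ω) := by
    rw [div_div_div_eq, div_mul_div_comm, mul_comm (A ω)]
  have hnormalized : M⁻¹ ≤ ∫ ω, A ω / α / (B ω / β) ∂P := by
    refine inv_le_integral_div_of_integral_sq_eq_one (fun ω => div_nonneg (hA ω) hα.le)
      (fun ω => div_nonneg (hB ω) hβ.le) (by simpa [hα.ne', hβ.ne'] using hAB) hM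
      (by simpa only [div_eq_mul_inv] using hA₄.mul_const α⁻¹)
      (by simpa only [div_eq_mul_inv] using hB₄.mul_const β⁻¹) ?_ ?_ ?_ ?_
    · simp only [div_pow]
      rw [integral_div, hα₂, div_self (hα₂ ▸ by positivity)]
    · simp only [div_pow]
      rw [integral_div, div_le_iff₀ (by positivity)]
      linarith [congrArg (M * · ^ 2) hα₂]
    · simp only [div_pow]
      rw [integral_div, div_le_iff₀ (by positivity)]
      linarith [congrArg (M * · ^ 2) hβ₂]
    · simpa only [hratio] using hint.const_mul (β / α)
  simp only [hratio, integral_const_mul] at hnormalized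
  calc M⁻¹ * (α / β) ≤ β / α * (∫ ω, A ω / B ω ∂P) * (α / β) := by gcongr
    _ = ∫ ω, A ω / B ω ∂P := by field_simp

end Ratio

lemma mul_gaussianPDFReal_le_measureReal_Ioo {v : ℝ≥0} (hv : v ≠ 0) {a b c : ℝ} (ha : -c ≤ a)
    (hb : b ≤ c) (hab : a ≤ b) :
    (b - a) * gaussianPDFReal 0 v c ≤ (gaussianReal 0 v).real (Set.Ioo a b) := by
  rw [measureReal_def, gaussianReal_apply_eq_integral 0 hv,
    ENNReal.toReal_ofReal (integral_nonneg fun t => gaussianPDFReal_nonneg 0 v t)]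
  calc (b - a) * gaussianPDFReal 0 v c = ∫ _ in Set.Ioo a b, gaussianPDFReal 0 v c := by
        simp [hab]
    _ ≤ ∫ t in Set.Ioo a b, gaussianPDFReal 0 v t := by
        refine setIntegral_mono_on (by simp) (integrable_gaussianPDFReal 0 v).integrableOn
          measurableSet_Ioo fun t ht => ?_
        have htc : t ^ 2 ≤ c ^ 2 := sq_le_sq' (by linarith [ht.1]) (by linarith [ht.2])
        simp only [gaussianPDFReal, sub_zero]
        gcongr

lemma measureReal_preimage_of_hasGaussianLaw {X : Ω → ℝ} (hX : HasGaussianLaw X P)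
    (hX₀ : P[X] = 0) {s : Set ℝ} (hs : MeasurableSet s) :
    P.real (X ⁻¹' s) = (gaussianReal 0 1).real ((√Var[X; P] * ·) ⁻¹' s) := by
  have hmap : P.map X = (gaussianReal 0 1).map (√Var[X; P] * ·) := by
    rw [hX.map_eq_gaussianReal, hX₀, gaussianReal_map_const_mul]
    congr 1
    · simp
    · ext
      simp [variance_nonneg]
  rw [← map_measureReal_apply_of_aemeasurable hX.aemeasurable hs, hmap,
    map_measureReal_apply (by fun_prop) hs]

lemma le_measureReal_abs_lt_of_hasGaussianLaw {X : Ω → ℝ} (hX : HasGaussianLaw X P)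
    (hX₀ : P[X] = 0) {r s : ℝ} (hr : 0 ≤ r) (hrs : r ≤ s) (hXs : √Var[X; P] ≤ s) :
    2 * gaussianPDFReal 0 1 1 * (r / s) ≤ P.real {ω | |X ω| < r} := by
  have hle_one : r / s ≤ 1 := div_le_one_of_le₀ hrs (hr.trans hrs)
  have hnonneg : 0 ≤ r / s := div_nonneg hr (hr.trans hrs)
  calc 2 * gaussianPDFReal 0 1 1 * (r / s)
      = (r / s - -(r / s)) * gaussianPDFReal 0 1 1 := by ring
    _ ≤ (gaussianReal 0 1).real (Set.Ioo (-(r / s)) (r / s)) :=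
        mul_gaussianPDFReal_le_measureReal_Ioo one_ne_zero (by linarith) hle_one (by linarith)
    _ ≤ (gaussianReal 0 1).real ((√Var[X; P] * ·) ⁻¹' {t | |t| < r}) := by
        refine measureReal_mono fun t ht => ?_
        have hs : 0 < s := (hr.trans hrs).lt_of_ne' (by rintro rfl; simp at ht)
        have hts : |t| * s < r := (lt_div_iff₀ hs).1 (abs_lt.2 ht)
        simp only [Set.mem_preimage, Set.mem_ofPred_eq, abs_mul, abs_of_nonneg (Real.sqrt_nonneg _)]
        nlinarith [abs_nonneg t]
    _ = P.real {ω | |X ω| < r} :=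
        (measureReal_preimage_of_hasGaussianLaw hX hX₀
          (measurableSet_lt (by fun_prop) (by fun_prop))).symm

lemma le_measureReal_lt_abs_of_hasGaussianLaw {X : Ω → ℝ} (hX : HasGaussianLaw X P)
    (hX₀ : P[X] = 0) (hVar : 0 < √Var[X; P]) :
    gaussianPDFReal 0 1 2 ≤ P.real {ω | √Var[X; P] < |X ω|} := by
  calc gaussianPDFReal 0 1 2 = (2 - 1) * gaussianPDFReal 0 1 2 := by ring
    _ ≤ (gaussianReal 0 1).real (Set.Ioo 1 2) :=
        mul_gaussianPDFReal_le_measureReal_Ioo one_ne_zero (by norm_num) le_rfl one_le_two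
    _ ≤ (gaussianReal 0 1).real ((√Var[X; P] * ·) ⁻¹' {t | √Var[X; P] < |t|}) := by
        refine measureReal_mono fun t ht => ?_
        simp only [Set.mem_preimage, Set.mem_ofPred_eq, abs_mul, abs_of_pos hVar]
        exact lt_mul_of_one_lt_right hVar (ht.1.trans_le (le_abs_self t))
    _ = P.real {ω | √Var[X; P] < |X ω|} :=
        (measureReal_preimage_of_hasGaussianLaw hX hX₀
          (measurableSet_lt (by fun_prop) (by fun_prop))).symm

lemma indepFun_add_sub_of_variance_eq {S T : Ω → ℝ}
    (hST : HasGaussianLaw (fun ω => (S ω, T ω)) P) (hVar : Var[S; P] = Var[T; P]) :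
    (S + T) ⟂ᵢ[P] (S - T) := by
  have := hST.isProbabilityMeasure
  have hS := hST.fst.memLp_two
  have hT := hST.snd.memLp_two
  have hlaw : HasGaussianLaw (fun ω => ((S + T) ω, (S - T) ω)) P :=
    hST.map_fun ((ContinuousLinearMap.fst ℝ ℝ ℝ + ContinuousLinearMap.snd ℝ ℝ ℝ).prod
      (ContinuousLinearMap.fst ℝ ℝ ℝ - ContinuousLinearMap.snd ℝ ℝ ℝ))
  refine hlaw.indepFun_of_covariance_eq_zero ?_
  rw [covariance_add_left hS hT (hS.sub hT), covariance_sub_right hS hS hT,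
    covariance_sub_right hT hS hT, covariance_self hST.fst.aemeasurable,
    covariance_self hST.snd.aemeasurable, covariance_comm T S, hVar]
  ring

lemma measureReal_inter_preimage_eq_mul_of_indepFun {α β : Type*} [MeasurableSpace α]
    [MeasurableSpace β] {X : Ω → α} {Y : Ω → β} (hXY : X ⟂ᵢ[P] Y) {s : Set α} {t : Set β}
    (hs : MeasurableSet s) (ht : MeasurableSet t) :
    P.real (X ⁻¹' s ∩ Y ⁻¹' t) = P.real (X ⁻¹' s) * P.real (Y ⁻¹' t) := by
  simp only [measureReal_def, hXY.measure_inter_preimage_eq_mul s t hs ht, ENNReal.toReal_mul]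

lemma sqrt_variance_add_le_of_variance_eq [IsFiniteMeasure P] {S T : Ω → ℝ} (hS : MemLp S 2 P)
    (hT : MemLp T 2 P) (hVar : Var[S; P] = Var[T; P]) : √Var[S + T; P] ≤ 2 * √Var[S; P] := by
  have hparallelogram : Var[S + T; P] + Var[S - T; P] = 4 * Var[S; P] := by
    rw [variance_add hS hT, variance_sub hS hT, ← hVar]
    ring
  refine Real.sqrt_le_iff.2 ⟨by positivity, ?_⟩
  rw [mul_pow, Real.sq_sqrt (variance_nonneg S P)]
  linarith [variance_nonneg (S - T) P]

lemma sqrt_variance_sub_le_of_variance_eq [IsFiniteMeasure P] {S T : Ω → ℝ} (hS : MemLp S 2 P)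
    (hT : MemLp T 2 P) (hVar : Var[S; P] = Var[T; P]) : √Var[S - T; P] ≤ 2 * √Var[S; P] := by
  rw [sub_eq_add_neg]
  exact sqrt_variance_add_le_of_variance_eq hS hT.neg (hVar.trans variance_neg.symm)

lemma mul_neg_of_abs_add_lt_abs_sub {s t : ℝ} (h : |s + t| < |s - t|) : s * t < 0 := by
  linarith [sq_lt_sq.2 h]

lemma le_measureReal_mul_neg_of_variance_eq {S T : Ω → ℝ}
    (hST : HasGaussianLaw (fun ω => (S ω, T ω)) P) (hS₀ : P[S] = 0) (hT₀ : P[T] = 0)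
    (hVar : Var[S; P] = Var[T; P]) :
    gaussianPDFReal 0 1 1 * gaussianPDFReal 0 1 2 * (√Var[S - T; P] / √Var[S; P]) ≤
      P.real {ω | S ω * T ω < 0} := by
  have := hST.isProbabilityMeasure
  set r := √Var[S - T; P]
  set s := 2 * √Var[S; P] with hs
  obtain hr | hr : 0 = r ∨ 0 < r := (Real.sqrt_nonneg _).eq_or_lt
  · simp [← hr]
  have hadd : √Var[S + T; P] ≤ s :=
    sqrt_variance_add_le_of_variance_eq hST.fst.memLp_two hST.snd.memLp_two hVar
  have hsub : r ≤ s := sqrt_variance_sub_le_of_variance_eq hST.fst.memLp_two hST.snd.memLp_two hVar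
  have hadd₀ : P[S + T] = 0 := by
    rw [integral_add' hST.fst.integrable hST.snd.integrable, hS₀, hT₀, add_zero]
  have hsub₀ : P[S - T] = 0 := by
    rw [integral_sub' hST.fst.integrable hST.snd.integrable, hS₀, hT₀, sub_zero]
  calc gaussianPDFReal 0 1 1 * gaussianPDFReal 0 1 2 * (r / √Var[S; P])
      = 2 * gaussianPDFReal 0 1 1 * (r / s) * gaussianPDFReal 0 1 2 := by
        rw [hs, mul_comm 2 √Var[S; P], ← div_div]
        ring
    _ ≤ P.real {ω | |(S + T) ω| < r} * P.real {ω | r < |(S - T) ω|} := by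
        gcongr
        · exact gaussianPDFReal_nonneg 0 1 2
        · exact le_measureReal_abs_lt_of_hasGaussianLaw hST.add hadd₀ hr.le hsub hadd
        · exact le_measureReal_lt_abs_of_hasGaussianLaw hST.sub hsub₀ hr
    _ = P.real ({ω | |(S + T) ω| < r} ∩ {ω | r < |(S - T) ω|}) :=
        (measureReal_inter_preimage_eq_mul_of_indepFun (s := {t | |t| < r})
          (t := {t | r < |t|}) (indepFun_add_sub_of_variance_eq hST hVar)
          (measurableSet_lt (by fun_prop) measurable_const)
          (measurableSet_lt measurable_const (by fun_prop))).symm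
    _ ≤ P.real {ω | S ω * T ω < 0} :=
        measureReal_mono fun ω hω => mul_neg_of_abs_add_lt_abs_sub (hω.1.trans hω.2)

lemma integral_measureReal_prodMk_preimage {α β : Type*} [MeasurableSpace α] [MeasurableSpace β]
    (μ : Measure α) (ν : Measure β) [IsFiniteMeasure ν] {s : Set (α × β)}
    (hs : MeasurableSet s) : ∫ x, ν.real (Prod.mk x ⁻¹' s) ∂μ = (μ.prod ν).real s := by
  rw [measureReal_def, Measure.prod_apply hs]
  exact integral_toReal (measurable_measure_prodMk_left hs).aemeasurable
    (.of_forall fun x => measure_lt_top _ _)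

lemma norm_sub_div_norm_le_two {F : Type*} [SeminormedAddCommGroup F] {a b : F} (hab : ‖a‖ = ‖b‖) :
    ‖a - b‖ / ‖a‖ ≤ 2 :=
  div_le_of_le_mul₀ (norm_nonneg a) zero_le_two
    ((norm_sub_le a b).trans_eq (by rw [← hab, two_mul]))

lemma sqrt_div_sqrt_le_integral_norm_div_norm {E F : Type*}
    [NormedAddCommGroup E] [InnerProductSpace ℝ E] [FiniteDimensional ℝ E] [MeasurableSpace E]
    [BorelSpace E] [NormedAddCommGroup F] [InnerProductSpace ℝ F] [FiniteDimensional ℝ F]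
    [MeasurableSpace F] [BorelSpace F] {X : Ω → E} {Y : Ω → F} (hX : HasGaussianLaw X P)
    (hY : HasGaussianLaw Y P) (hX₀ : P[X] = 0) (hY₀ : P[Y] = 0) (hXY : ∀ ω, Y ω = 0 → X ω = 0)
    (hint : Integrable (fun ω => ‖X ω‖ / ‖Y ω‖) P) :
    3⁻¹ * (√(∫ ω, ‖X ω‖ ^ 2 ∂P) / √(∫ ω, ‖Y ω‖ ^ 2 ∂P)) ≤ ∫ ω, ‖X ω‖ / ‖Y ω‖ ∂P := by
  have := hX.isProbabilityMeasure
  exact sqrt_div_sqrt_le_integral_div (fun ω => norm_nonneg _) (fun ω => norm_nonneg _)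
    (by simpa only [norm_eq_zero] using hXY) three_pos (hX.memLp (by simp)).norm
    (hY.memLp (by simp)).norm (integral_norm_pow_four_le_of_hasGaussianLaw hX hX₀)
    (integral_norm_pow_four_le_of_hasGaussianLaw hY hY₀) hint

section StdGaussian

variable {E F : Type*} [NormedAddCommGroup E] [InnerProductSpace ℝ E] [FiniteDimensional ℝ E]
  [MeasurableSpace E] [BorelSpace E] [NormedAddCommGroup F] [InnerProductSpace ℝ F]
  [FiniteDimensional ℝ F] [MeasurableSpace F] [BorelSpace F]

lemma integral_inner_stdGaussian (a : F) : ∫ y, ⟪a, y⟫ ∂stdGaussian F = 0 :=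
  integral_strongDual_stdGaussian (innerSL ℝ a)

lemma variance_inner_stdGaussian (a : F) : Var[fun y => ⟪a, y⟫; stdGaussian F] = ‖a‖ ^ 2 := by
  rw [← innerSL_apply_norm ℝ a]
  exact variance_dual_stdGaussian (innerSL ℝ a)

lemma integral_sq_inner_stdGaussian (a : F) : ∫ y, ⟪a, y⟫ ^ 2 ∂stdGaussian F = ‖a‖ ^ 2 := by
  rw [← variance_inner_stdGaussian a,
    variance_of_integral_eq_zero (by fun_prop) (integral_inner_stdGaussian a)]

lemma le_measureReal_inner_mul_inner_neg {a b : F} (hab : ‖a‖ = ‖b‖) :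
    gaussianPDFReal 0 1 1 * gaussianPDFReal 0 1 2 * (‖a - b‖ / ‖a‖) ≤
      (stdGaussian F).real {y | ⟪a, y⟫ * ⟪b, y⟫ < 0} := by
  have hlaw : HasGaussianLaw (fun y : F => (⟪a, y⟫, ⟪b, y⟫)) (stdGaussian F) :=
    IsGaussian.hasGaussianLaw_id.map_fun ((innerSL ℝ a).prod (innerSL ℝ b))
  have hsub : (fun y : F => ⟪a, y⟫) - (fun y => ⟪b, y⟫) = fun y => ⟪a - b, y⟫ := by
    ext y
    exact (inner_sub_left a b y).symm
  have h := le_measureReal_mul_neg_of_variance_eq hlaw (integral_inner_stdGaussian a)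
    (integral_inner_stdGaussian b) (by simp only [variance_inner_stdGaussian, hab])
  simpa only [hsub, variance_inner_stdGaussian, Real.sqrt_sq (norm_nonneg _)] using h

lemma integral_clm_stdGaussian {G : Type*} [NormedAddCommGroup G] [NormedSpace ℝ G]
    [CompleteSpace G] (A : E →L[ℝ] G) : ∫ x, A x ∂stdGaussian E = 0 := by
  rw [A.integral_comp_id_comm IsGaussian.integrable_id]
  simp

lemma le_measureReal_inner_clm_mul_inner_clm_neg {A B : E →L[ℝ] F} (hAB : ∀ x, ‖A x‖ = ‖B x‖) :
    gaussianPDFReal 0 1 1 * gaussianPDFReal 0 1 2 / 3 *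
        (√(∫ x, ‖(A - B) x‖ ^ 2 ∂stdGaussian E) / √(∫ x, ‖A x‖ ^ 2 ∂stdGaussian E)) ≤
      ((stdGaussian E).prod (stdGaussian F)).real {z | ⟪A z.1, z.2⟫ * ⟪B z.1, z.2⟫ < 0} := by
  set c := gaussianPDFReal 0 1 1 * gaussianPDFReal 0 1 2
  have hc : 0 ≤ c := mul_nonneg (gaussianPDFReal_nonneg 0 1 1) (gaussianPDFReal_nonneg 0 1 2)
  have hmeas : MeasurableSet {z : E × F | ⟪A z.1, z.2⟫ * ⟪B z.1, z.2⟫ < 0} :=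
    measurableSet_lt (by fun_prop) measurable_const
  have hlaw (L : E →L[ℝ] F) : HasGaussianLaw L (stdGaussian E) :=
    IsGaussian.hasGaussianLaw_id.map_fun L
  have hint : Integrable (fun x => ‖(A - B) x‖ / ‖A x‖) (stdGaussian E) := by
    refine .of_bound (Measurable.aestronglyMeasurable (by fun_prop)) 2 (.of_forall fun x => ?_)
    rw [Real.norm_of_nonneg (by positivity)]
    exact norm_sub_div_norm_le_two (hAB x)
  have hker (x : E) (hx : A x = 0) : (A - B) x = 0 := by
    have hBx : B x = 0 := by rw [← norm_eq_zero, ← hAB x, hx, norm_zero]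
    simp [hx, hBx]
  calc c / 3 * (√(∫ x, ‖(A - B) x‖ ^ 2 ∂stdGaussian E) / √(∫ x, ‖A x‖ ^ 2 ∂stdGaussian E))
      = c * (3⁻¹ * (√(∫ x, ‖(A - B) x‖ ^ 2 ∂stdGaussian E) /
          √(∫ x, ‖A x‖ ^ 2 ∂stdGaussian E))) := by ring
    _ ≤ c * ∫ x, ‖(A - B) x‖ / ‖A x‖ ∂stdGaussian E := by
        gcongr
        exact sqrt_div_sqrt_le_integral_norm_div_norm (hlaw (A - B)) (hlaw A)
          (integral_clm_stdGaussian (A - B)) (integral_clm_stdGaussian A) hker hint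
    _ = ∫ x, c * (‖(A - B) x‖ / ‖A x‖) ∂stdGaussian E := (integral_const_mul _ _).symm
    _ ≤ ∫ x, (stdGaussian F).real {y | ⟪A x, y⟫ * ⟪B x, y⟫ < 0} ∂stdGaussian E :=
        integral_mono (hint.const_mul c)
          (Measure.integrable_measure_prodMk_left hmeas (measure_ne_top _ _))
          fun x => le_measureReal_inner_mul_inner_neg (hAB x)
    _ = _ := integral_measureReal_prodMk_preimage _ _ hmeas

end StdGaussian

lemma sign_ne_sign_of_mul_neg {s t : ℝ} (h : s * t < 0) : Real.sign s ≠ Real.sign t := by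
  obtain ⟨hs, ht⟩ | ⟨hs, ht⟩ := mul_neg_iff.1 h
  · norm_num [Real.sign_of_pos hs, Real.sign_of_neg ht]
  · norm_num [Real.sign_of_neg hs, Real.sign_of_pos ht]

lemma measurePreserving_toLp_gaussianReal {ι : Type*} [Fintype ι] :
    MeasurePreserving (toLp 2) (Measure.pi fun _ : ι => gaussianReal 0 1)
      (stdGaussian (EuclideanSpace ℝ ι)) :=
  ⟨by fun_prop, map_pi_eq_stdGaussian⟩

section Matrix

variable {m n : Type*} [Fintype m] [Fintype n]

lemma measurePreserving_toLp_inl_inr_gaussianReal :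
    MeasurePreserving (fun x : m ⊕ n → ℝ => (toLp 2 (x ∘ Sum.inl), toLp 2 (x ∘ Sum.inr)))
      (Measure.pi fun _ => gaussianReal 0 1)
      ((stdGaussian (EuclideanSpace ℝ m)).prod (stdGaussian (EuclideanSpace ℝ n))) := by
  have hm := measurePreserving_toLp_gaussianReal (ι := m)
  have hn := measurePreserving_toLp_gaussianReal (ι := n)
  exact (hm.prod hn).comp
    (measurePreserving_sumPiEquivProdPi fun _ : m ⊕ n => gaussianReal 0 1)

/-- The operator `x ↦ Uᵀ x` between Euclidean spaces. It is transposed so that the bilinear form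
`xᵀ U y` is `⟪Uᵀ x, y⟫`. -/
noncomputable def transposeCLM [DecidableEq m] (U : Matrix m n ℝ) :
    EuclideanSpace ℝ m →L[ℝ] EuclideanSpace ℝ n :=
  (toLpLin 2 2 Uᵀ).toContinuousLinearMap

variable [DecidableEq m]

lemma transposeCLM_apply (U : Matrix m n ℝ) (x : EuclideanSpace ℝ m) (j : n) :
    transposeCLM U x j = ∑ i, U i j * x i :=
  rfl

lemma transposeCLM_sub (U V : Matrix m n ℝ) :
    transposeCLM (U - V) = transposeCLM U - transposeCLM V := by
  simp [transposeCLM]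

lemma inner_transposeCLM (U : Matrix m n ℝ) (x : EuclideanSpace ℝ m) (y : EuclideanSpace ℝ n) :
    ⟪transposeCLM U x, y⟫ = ∑ i, ∑ j, x i * U i j * y j := by
  simp only [PiLp.inner_apply, RCLike.inner_apply, conj_trivial, transposeCLM_apply,
    Finset.mul_sum]
  rw [Finset.sum_comm]
  exact Finset.sum_congr rfl fun i _ => Finset.sum_congr rfl fun j _ => by ring

lemma norm_sq_transposeCLM (U : Matrix m n ℝ) (x : EuclideanSpace ℝ m) :
    ‖transposeCLM U x‖ ^ 2 = x ⬝ᵥ (U * Uᵀ) *ᵥ x := by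
  rw [← mulVec_mulVec, dotProduct_mulVec, ← mulVec_transpose, EuclideanSpace.real_norm_sq_eq]
  simp only [dotProduct, ← sq]
  rfl

lemma integral_norm_sq_transposeCLM (U : Matrix m n ℝ) :
    ∫ x, ‖transposeCLM U x‖ ^ 2 ∂stdGaussian (EuclideanSpace ℝ m) = ∑ i, ∑ j, U i j ^ 2 := by
  have hcoord (x : EuclideanSpace ℝ m) (j : n) :
      transposeCLM U x j = ⟪toLp 2 fun i => U i j, x⟫ := by
    simp [PiLp.inner_apply, transposeCLM_apply, mul_comm]
  have hint (j : n) : Integrable (fun x : EuclideanSpace ℝ m => ⟪toLp 2 fun i => U i j, x⟫ ^ 2)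
      (stdGaussian (EuclideanSpace ℝ m)) :=
    (IsGaussian.hasGaussianLaw_id.map_fun (innerSL ℝ (toLp 2 fun i => U i j))
      ).memLp_two.integrable_sq
  simp only [EuclideanSpace.real_norm_sq_eq, hcoord]
  rw [integral_finsetSum _ fun j _ => hint j, Finset.sum_comm]
  simp only [integral_sq_inner_stdGaussian, EuclideanSpace.real_norm_sq_eq]

end Matrix

lemma sum_sq_of_mul_transpose_eq_one {m n : Type*} [Fintype m] [Fintype n] [DecidableEq m]
    {U : Matrix m n ℝ} (hU : U * Uᵀ = 1) : ∑ i, ∑ j, U i j ^ 2 = Fintype.card m := by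
  rw [← trace_one (R := ℝ), ← hU]
  simp only [trace, diag_apply, mul_apply, transpose_apply, sq]

theorem stmt_12_general {m n : Type*} [Fintype m] [Fintype n] (U V : Matrix m n ℝ)
    (hUV : U * Uᵀ = V * Vᵀ) :
    gaussianPDFReal 0 1 1 * gaussianPDFReal 0 1 2 / 3 *
        √(∑ i, ∑ j, (U i j - V i j) ^ 2) / √(∑ i, ∑ j, U i j ^ 2) ≤
      (Measure.pi (fun _ : m ⊕ n => gaussianReal 0 1)
        {x | Real.sign (∑ i, ∑ j, x (Sum.inl i) * U i j * x (Sum.inr j)) ≠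
          Real.sign (∑ i, ∑ j, x (Sum.inl i) * V i j * x (Sum.inr j))}).toReal := by
  classical
  have hnorm (x : EuclideanSpace ℝ m) : ‖transposeCLM U x‖ = ‖transposeCLM V x‖ := by
    rw [← sq_eq_sq₀ (norm_nonneg _) (norm_nonneg _), norm_sq_transposeCLM, norm_sq_transposeCLM,
      hUV]
  have h := le_measureReal_inner_clm_mul_inner_clm_neg hnorm
  rw [← transposeCLM_sub, integral_norm_sq_transposeCLM, integral_norm_sq_transposeCLM,
    ← mul_div_assoc, ← measurePreserving_toLp_inl_inr_gaussianReal.measureReal_preimage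
      (measurableSet_lt (by fun_prop) measurable_const).nullMeasurableSet] at h
  refine h.trans (measureReal_mono fun x hx => sign_ne_sign_of_mul_neg ?_)
  simpa only [Set.mem_preimage, Set.mem_ofPred_eq, inner_transposeCLM, Function.comp_apply]
    using hx

/-- There is `C₁ > 0` such that for all `d` and orthogonal `U, V`,
`P_{x ∼ N(0,I_{2d})}(sign(x_{1:d}ᵀ U x_{d+1:2d}) ≠ sign(x_{1:d}ᵀ V x_{d+1:2d}))
  ≥ C₁ ‖U − V‖_F / √d`. -/
theorem stmt_12 :
    ∃ C₁ : ℝ, 0 < C₁ ∧ ∀ (d : ℕ) (U V : Matrix (Fin d) (Fin d) ℝ),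
      U ∈ Matrix.orthogonalGroup (Fin d) ℝ →
      V ∈ Matrix.orthogonalGroup (Fin d) ℝ →
      C₁ * Real.sqrt (∑ i, ∑ j, (U i j - V i j) ^ 2) / Real.sqrt d
        ≤ (stdGaussian2 d {x | Real.sign (∑ i, ∑ j, x (Sum.inl i) * U i j * x (Sum.inr j))
            ≠ Real.sign (∑ i, ∑ j, x (Sum.inl i) * V i j * x (Sum.inr j))}).toReal := by
  refine ⟨gaussianPDFReal 0 1 1 * gaussianPDFReal 0 1 2 / 3, ?_, fun d U V hU hV => ?_⟩
  · exact div_pos (mul_pos (gaussianPDFReal_pos 0 1 1 one_ne_zero)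
      (gaussianPDFReal_pos 0 1 2 one_ne_zero)) three_pos
  · have hUU : U * Uᵀ = 1 := (mem_orthogonalGroup_iff _ _).1 hU
    have hVV : V * Vᵀ = 1 := (mem_orthogonalGroup_iff _ _).1 hV
    simpa only [stdGaussian2, sum_sq_of_mul_transpose_eq_one hUU, Fintype.card_fin] using
      stmt_12_general U V (hUU.trans hVV.symm)
end
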